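/- If the existential player has a winning strategy for the quantified 3-SAT formula Φ = ∃x₁∀y₁⋯∃xₙ∀yₙ φ, i.e., there exists f : {0,1}* → {0,1} such that φ evaluates to true under every assignment s of x₁, y₁, …, xₙ, yₙ with s(x_i) = f(s(y₁), …, s(y_{i−1})) for all i = 1, …, n, then the CSTN Γ_Φ is dynamically controllable. -/

import Mathlib

/-!
Rounds are numbered from `0`. The controller runs the tasks of round `i` in the window starting
at `A_i = i (n + 4)`, with `X_i`, `Y_i` at fixed times, and keeps a prediction `prediction f s i` of `x_i`, computed from the
values of the earlier `y`s.

* As long as every earlier `x_j` has agreed with its prediction, `B_i = A_i`. The `C`-task of the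
  predicted value runs at `A_i` and the other one at `A_i + n + 1`. The single truth value
  observed at `A_i` already rules out one of the two labels constraining `D_i`, and `D_i` is
  placed accordingly.
* If `x_i` differs from its prediction, the bound `B_{i+1} ≤ C_i^{x_i} + (n + 4)` refers to the
  late `C`-task, so the delay `B - A` can jump to `n + 1`. With that delay
  `D_i = A_i + n + 2` satisfies both constraints on `D_i`, and the delay is kept until the end.

Hence `B_n - A_n = n + 1` as soon as some prediction fails, while if none fails the winning
strategy makes `φ` true and no clause label is satisfied. Whether a prediction failed before round
`i` depends only on `x_j`, `y_j` with `j < i`, all observed before `A_i`, which makes the strategy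
dynamic.
-/

open Classical

/-- A label over propositional variables `P`: a conjunction of positive or negative
literals over distinct variables, encoded as a partial assignment (`none` means the
variable does not occur in the label). The empty label is `fun _ => none`. -/
abbrev CLabel (P : Type) := P → Option Bool

/-- The empty label `λ`. -/
def emptyLabel (P : Type) : CLabel P := fun _ => none

/-- A scenario `s` satisfies a label `ℓ` (written `s ⊨ ℓ`). -/
def sats {P : Type} (s : P → Bool) (ℓ : CLabel P) : Prop :=
  ∀ p b, ℓ p = some b → s p = b

/-- A Conditional Simple Temporal Network over tasks `T` and propositional
variables `P`.  A labeled constraint `(X, Y, δ, ℓ)` represents `(Y - X ≤ δ, ℓ)`. -/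
structure CSTN (T P : Type) where
  /-- The labeled constraints. -/
  C : Set (T × T × ℝ × CLabel P)
  Cfin : C.Finite
  /-- The label of each task. -/
  L : T → CLabel P
  /-- The observation tasks. -/
  OT : Set T
  /-- The observation task of each propositional variable. -/
  obs : P → T
  obs_mem : ∀ p, obs p ∈ OT
  obs_inj : Function.Injective obs
  obs_surj : ∀ X ∈ OT, ∃ p, obs p = X
  /-- Restriction WD1. -/
  wd1 : ∀ c ∈ C, ∀ s : P → Bool, sats s c.2.2.2 → sats s (L c.1) ∧ sats s (L c.2.1)

namespace CSTN

variable {T P : Type} (Γ : CSTN T P)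

/-- The tasks `𝒯_s` executed in scenario `s` (the tasks of the projection `Γ_s`).
An execution strategy is encoded as a total function `σ : (P → Bool) → T → ℝ`;
the values `σ s X` for `X ∉ 𝒯_s` are irrelevant. -/
def Tasks (s : P → Bool) : Set T := {X | sats s (Γ.L X)}

/-- The history `Hist(t, s, σ)`: the partial scenario recording the values in `s` of
the propositional variables observed strictly before time `t`. -/
noncomputable def Hist (σ : (P → Bool) → T → ℝ) (t : ℝ) (s : P → Bool) : P → Option Bool :=
  fun p => if Γ.obs p ∈ Γ.Tasks s ∧ σ s (Γ.obs p) < t then some (s p) else none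

/-- The execution strategy `σ` is dynamic. -/
def Dynamic (σ : (P → Bool) → T → ℝ) : Prop :=
  ∀ s s' : P → Bool, ∀ X ∈ Γ.Tasks s,
    Γ.Hist σ (σ s X) s = Γ.Hist σ (σ s X) s' → X ∈ Γ.Tasks s' ∧ σ s' X = σ s X

/-- The execution strategy `σ` is viable: in every scenario `s`, the schedule `σ s`
satisfies all constraints of the projection `Γ_s`. -/
def Viable (σ : (P → Bool) → T → ℝ) : Prop :=
  ∀ s : P → Bool, ∀ c ∈ Γ.C, sats s c.2.2.2 → σ s c.2.1 - σ s c.1 ≤ c.2.2.1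

/-- `Γ` is dynamically controllable: it admits a dynamic and viable execution strategy. -/
def DynamicallyControllable : Prop :=
  ∃ σ : (P → Bool) → T → ℝ, Γ.Dynamic σ ∧ Γ.Viable σ

end CSTN

/-! ### The reduction from Q3SAT: the CSTN `Γ_Φ` -/

/-- A literal of the Q3SAT formula: a variable `x i` (`Sum.inl i`) or `y i`
(`Sum.inr i`) together with its sign (`true` = positive occurrence). -/
abbrev QLit (n : ℕ) := (Fin n ⊕ Fin n) × Bool

/-- A clause `l₁ ∨ l₂ ∨ l₃` of the 3CNF `φ`. -/
abbrev QClause (n : ℕ) := QLit n × QLit n × QLit n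

/-- The propositional variables `x i`, `y i`, `c i ⁰`, `c i ¹` of `Γ_Φ` (0-based). -/
inductive PhiVar (n : ℕ) where
  | x (i : Fin n) | y (i : Fin n) | c0 (i : Fin n) | c1 (i : Fin n)
deriving DecidableEq

/-- The tasks of `Γ_Φ` (0-based: paper's `A_i`, `i = 1, …, n+1`, is `A ⟨i-1⟩`). -/
inductive PhiTask (n : ℕ) where
  | A (i : Fin (n + 1)) | B (i : Fin (n + 1))
  | C0 (i : Fin n) | C1 (i : Fin n) | D (i : Fin n)
  | X (i : Fin n) | Y (i : Fin n)
deriving DecidableEq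

/-- The propositional variable on which a literal occurs. -/
def litVar {n : ℕ} (l : QLit n) : PhiVar n :=
  match l.1 with
  | .inl i => .x i
  | .inr i => .y i

/-- The literals of a clause occur on pairwise distinct variables
(so that `ℓ_j = ¬l₁ ∧ ¬l₂ ∧ ¬l₃` is a well-formed label). -/
def GoodClause {n : ℕ} (c : QClause n) : Prop :=
  litVar c.1 ≠ litVar c.2.1 ∧ litVar c.1 ≠ litVar c.2.2 ∧ litVar c.2.1 ≠ litVar c.2.2

/-- A literal evaluates to true under an assignment. -/
def evalLit {n : ℕ} (s : PhiVar n → Bool) (l : QLit n) : Prop := s (litVar l) = l.2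

/-- A clause evaluates to true under an assignment. -/
def evalClause {n : ℕ} (s : PhiVar n → Bool) (c : QClause n) : Prop :=
  evalLit s c.1 ∨ evalLit s c.2.1 ∨ evalLit s c.2.2

/-- The 3CNF `φ` evaluates to true under an assignment. -/
def evalCNF {n m : ℕ} (cl : Fin m → QClause n) (s : PhiVar n → Bool) : Prop :=
  ∀ j, evalClause s (cl j)

/-- The label consisting of the single literal forcing `p` to `b`. -/
def singleLabel {n : ℕ} (p : PhiVar n) (b : Bool) : CLabel (PhiVar n) :=
  fun q => if q = p then some b else none

/-- The label conjunction of two literals. -/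
def pairLabel {n : ℕ} (p : PhiVar n) (bp : Bool) (q : PhiVar n) (bq : Bool) :
    CLabel (PhiVar n) :=
  fun r => if r = p then some bp else if r = q then some bq else none

/-- The label `ℓ_j := ¬l_{j,1} ∧ ¬l_{j,2} ∧ ¬l_{j,3}`, the negation of the clause. -/
def clauseLabel {n : ℕ} (c : QClause n) : CLabel (PhiVar n) :=
  fun q =>
    if q = litVar c.1 then some (!c.1.2)
    else if q = litVar c.2.1 then some (!c.2.1.2)
    else if q = litVar c.2.2 then some (!c.2.2.2)
    else none

/-- `𝒪(x i) = X i`, `𝒪(y i) = Y i`, `𝒪(c i ⁰) = C i ⁰`, `𝒪(c i ¹) = C i ¹`. -/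
def phiObs (n : ℕ) : PhiVar n → PhiTask n
  | .x i => .X i
  | .y i => .Y i
  | .c0 i => .C0 i
  | .c1 i => .C1 i

abbrev PhiCon (n : ℕ) := PhiTask n × PhiTask n × ℝ × CLabel (PhiVar n)

/-- The seven constraints of the `i`-th gadget (as `(X, Y, δ, ℓ)` meaning `Y - X ≤ δ`):
`(D_i ≤ B_i + 1, c_i⁰ ∧ c_i¹)`, `(D_i ≥ A_i + (n+2), ¬c_i⁰ ∧ ¬c_i¹)`,
`(X_i ≥ A_i + (n+2), λ)`, `(Y_i ≥ X_i + 1, λ)`, `(A_{i+1} ≥ Y_i + 1, λ)`,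
`(B_{i+1} ≤ C_i⁰ + (n+4), ¬x_i)`, `(B_{i+1} ≤ C_i¹ + (n+4), x_i)`. -/
def gadget (n : ℕ) (i : Fin n) : Set (PhiCon n) :=
  {(.B i.castSucc, .D i, 1, pairLabel (.c0 i) true (.c1 i) true),
   (.D i, .A i.castSucc, -((n : ℝ) + 2), pairLabel (.c0 i) false (.c1 i) false),
   (.X i, .A i.castSucc, -((n : ℝ) + 2), emptyLabel _),
   (.Y i, .X i, -1, emptyLabel _),
   (.A i.succ, .Y i, -1, emptyLabel _),
   (.C0 i, .B i.succ, (n : ℝ) + 4, singleLabel (.x i) false),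
   (.C1 i, .B i.succ, (n : ℝ) + 4, singleLabel (.x i) true)}

/-- The constraints of `Γ_Φ`: `(B₁ - A₁ ≤ 0, λ)`, the gadget constraints, and the
clause constraints `(B_{n+1} - A_{n+1} ≥ n+1, ℓ_j)` for `j = 1, …, m`. -/
def PhiC (n m : ℕ) (cl : Fin m → QClause n) : Set (PhiCon n) :=
  insert (.A 0, .B 0, (0 : ℝ), emptyLabel _)
    ((⋃ i : Fin n, gadget n i) ∪
     (⋃ j : Fin m,
       {(.B (Fin.last n), .A (Fin.last n), -((n : ℝ) + 1), clauseLabel (cl j))}))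

/-- The CSTN `Γ_Φ` associated to the Q3SAT formula
`Φ = ∃x₁∀y₁ ⋯ ∃xₙ∀yₙ ⋀_{j=1}^m (l_{j,1} ∨ l_{j,2} ∨ l_{j,3})`. -/
def GammaPhi (n m : ℕ) (cl : Fin m → QClause n) : CSTN (PhiTask n) (PhiVar n) where
  C := PhiC n m cl
  Cfin := by
    apply Set.Finite.insert
    apply Set.Finite.union
    · exact Set.finite_iUnion fun i =>
        (((((((Set.finite_singleton _).insert _).insert _).insert _).insert
          _).insert _).insert _)
    · exact Set.finite_iUnion fun j => Set.finite_singleton _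
  L := fun _ => emptyLabel _
  OT := Set.range (phiObs n)
  obs := phiObs n
  obs_mem := fun p => ⟨p, rfl⟩
  obs_inj := by
    intro p q hpq
    cases p <;> cases q <;> simp_all [phiObs]
  obs_surj := fun _ hX => hX
  wd1 := by
    intro c _ s _
    constructor <;> · intro p b hb; simp [emptyLabel] at hb

/-! ### The strategy -/

/-- The value `f (y_0, …, y_{i-1})` that the winning strategy `f` prescribes for `x i` in the
scenario `s`. -/
def prediction {n : ℕ} (f : List Bool → Bool) (s : PhiVar n → Bool) (i : Fin n) : Bool :=
  f (List.ofFn fun k : Fin i.val => s (.y ⟨k.val, k.isLt.trans i.isLt⟩))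

/-- In the scenario `s`, some variable `x j` with `j < k` differs from its predicted value. -/
def Deviated {n : ℕ} (f : List Bool → Bool) (s : PhiVar n → Bool) (k : ℕ) : Prop :=
  ∃ j : Fin n, j.val < k ∧ s (.x j) ≠ prediction f s j

/-- The truth value observed at the `C`-task of round `i` that belongs to the predicted value
of `x i`. -/
def earlyValue {n : ℕ} (f : List Bool → Bool) (s : PhiVar n → Bool) (i : Fin n) : Bool :=
  if prediction f s i = true then s (.c1 i) else s (.c0 i)

/-- The execution strategy for `Γ_Φ` built from a winning strategy `f`. Rounds are 0-based, round
`i` starting at time `i * (n + 4)`. -/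
noncomputable def phiStrategy (n : ℕ) (f : List Bool → Bool) (s : PhiVar n → Bool) :
    PhiTask n → ℝ
  | .A i => (i.val : ℝ) * (n + 4)
  | .B i => (i.val : ℝ) * (n + 4) + if Deviated f s i.val then (n : ℝ) + 1 else 0
  | .C0 i => (i.val : ℝ) * (n + 4) +
      if ¬ Deviated f s i.val ∧ prediction f s i = false then 0 else (n : ℝ) + 1
  | .C1 i => (i.val : ℝ) * (n + 4) +
      if ¬ Deviated f s i.val ∧ prediction f s i = true then 0 else (n : ℝ) + 1
  | .D i => (i.val : ℝ) * (n + 4) +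
      if ¬ Deviated f s i.val ∧ earlyValue f s i = true then 1 else (n : ℝ) + 2
  | .X i => (i.val : ℝ) * (n + 4) + (n + 2)
  | .Y i => (i.val : ℝ) * (n + 4) + (n + 3)

/-- Predictions only depend on the values of the earlier `y`s. -/
lemma prediction_congr {n : ℕ} (f : List Bool → Bool) {s s' : PhiVar n → Bool} {i : Fin n}
    (h : ∀ j : Fin n, j.val < i.val → s (.y j) = s' (.y j)) :
    prediction f s i = prediction f s' i := by
  unfold prediction
  congr 2
  funext k
  exact h _ k.isLt

lemma deviated_congr {n : ℕ} (f : List Bool → Bool) {s s' : PhiVar n → Bool} {k : ℕ}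
    (hx : ∀ j : Fin n, j.val < k → s (.x j) = s' (.x j))
    (hy : ∀ j : Fin n, j.val < k → s (.y j) = s' (.y j)) :
    Deviated f s k ↔ Deviated f s' k := by
  unfold Deviated
  refine exists_congr fun j => and_congr_right fun hj => ?_
  rw [hx j hj, prediction_congr f fun l hl => hy l (hl.trans hj)]

lemma deviated_succ {n : ℕ} {f : List Bool → Bool} {s : PhiVar n → Bool} {i : Fin n}
    (h : Deviated f s (i.val + 1)) (h' : ¬ Deviated f s i.val) :
    s (.x i) ≠ prediction f s i := by
  obtain ⟨j, hj, hne⟩ := h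
  rcases Nat.lt_succ_iff_lt_or_eq.mp hj with hlt | heq
  · exact absurd ⟨j, hlt, hne⟩ h'
  · obtain rfl : j = i := Fin.ext heq
    exact hne

/-- A scenario satisfying the label `ℓ_j` falsifies the clause. -/
lemma not_evalClause_of_sats {n : ℕ} {c : QClause n} (hc : GoodClause c)
    {s : PhiVar n → Bool} (h : sats s (clauseLabel c)) : ¬ evalClause s c := by
  obtain ⟨h1, h2, h3⟩ := hc
  have e1 := h (litVar c.1) (!c.1.2) (by simp [clauseLabel])
  have e2 := h (litVar c.2.1) (!c.2.1.2) (by simp [clauseLabel, h1.symm])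
  have e3 := h (litVar c.2.2) (!c.2.2.2) (by simp [clauseLabel, h2.symm, h3.symm])
  simp [evalClause, evalLit, e1, e2, e3]

/-! ### Dynamicity -/

/-- If two scenarios have the same history at time `t`, they agree on every variable whose
observation lies before `t` in the first one. -/
lemma eq_of_hist_eq {n m : ℕ} (cl : Fin m → QClause n) {σ : (PhiVar n → Bool) → PhiTask n → ℝ}
    {s s' : PhiVar n → Bool} {t : ℝ}
    (h : (GammaPhi n m cl).Hist σ t s = (GammaPhi n m cl).Hist σ t s') (p : PhiVar n)
    (hp : σ s (phiObs n p) < t) : s p = s' p := by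
  have hl : (GammaPhi n m cl).Hist σ t s p = some (s p) := by
    refine if_pos ⟨?_, hp⟩
    intro q b hb
    simp [GammaPhi, emptyLabel] at hb
  rw [h] at hl
  unfold CSTN.Hist at hl
  split_ifs at hl
  exact (Option.some.inj hl).symm

/-- Round `j` lasts `n + 4` time units and ends no later than the start of a later round `k`. -/
lemma round_end_le {n j k : ℕ} (h : j < k) :
    (j : ℝ) * (n + 4) + (n + 4) ≤ (k : ℝ) * (n + 4) := by
  have h1 : (j : ℝ) + 1 ≤ k := by exact_mod_cast h
  have h2 : (0 : ℝ) ≤ n := Nat.cast_nonneg n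
  nlinarith

lemma phiStrategy_dynamic (n m : ℕ) (cl : Fin m → QClause n) (f : List Bool → Bool) :
    (GammaPhi n m cl).Dynamic (phiStrategy n f) := by
  intro s s' T _ hh
  refine ⟨fun q b hb => by simp [GammaPhi, emptyLabel] at hb, ?_⟩
  have hn : (0 : ℝ) ≤ n := Nat.cast_nonneg n
  have key := eq_of_hist_eq cl hh
  -- A task of round `k` sees all `x j`, `y j` with `j < k`.
  have past : ∀ k : ℕ, (k : ℝ) * (n + 4) ≤ phiStrategy n f s T →
      (Deviated f s k ↔ Deviated f s' k) ∧
        ∀ i : Fin n, i.val = k → prediction f s i = prediction f s' i := by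
    intro k hk
    have hx : ∀ j : Fin n, j.val < k → s (.x j) = s' (.x j) := fun j hj =>
      key (.x j) (by have := round_end_le (n := n) hj; simp only [phiObs, phiStrategy] at *; linarith)
    have hy : ∀ j : Fin n, j.val < k → s (.y j) = s' (.y j) := fun j hj =>
      key (.y j) (by have := round_end_le (n := n) hj; simp only [phiObs, phiStrategy] at *; linarith)
    refine ⟨deviated_congr f hx hy, fun i hi => prediction_congr f fun j hj => hy j (hi ▸ hj)⟩
  cases T with
  | A i => rfl
  | X i => rfl
  | Y i => rfl
  | B i =>
    have := past i.val (by simp only [phiStrategy]; split_ifs <;> linarith)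
    simp only [phiStrategy, this.1]
  | C0 i =>
    have := past i.val (by simp only [phiStrategy]; split_ifs <;> linarith)
    simp only [phiStrategy, this.1, this.2 i rfl]
  | C1 i =>
    have := past i.val (by simp only [phiStrategy]; split_ifs <;> linarith)
    simp only [phiStrategy, this.1, this.2 i rfl]
  | D i =>
    have hlt : (i.val : ℝ) * (n + 4) < phiStrategy n f s (.D i) := by
      simp only [phiStrategy]; split_ifs <;> linarith
    obtain ⟨hd, hp⟩ := past i.val hlt.le
    have hp := hp i rfl
    by_cases hdev : Deviated f s i.val
    · simp only [phiStrategy, hdev, hd.mp hdev]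
      simp
    · -- Without deviation the early `C`-task runs at `A i`, before `D i`.
      have he : earlyValue f s i = earlyValue f s' i := by
        unfold earlyValue
        rw [← hp]
        cases hb : prediction f s i
        · simpa using key (.c0 i) (by
            refine lt_of_eq_of_lt ?_ hlt
            simp [phiObs, phiStrategy, hdev, hb])
        · simpa using key (.c1 i) (by
            refine lt_of_eq_of_lt ?_ hlt
            simp [phiObs, phiStrategy, hdev, hb])
      simp only [phiStrategy, ← hd, ← he]

/-! ### Viability -/

lemma phiStrategy_viable (n m : ℕ)
    (cl : Fin m → QClause n) (hgood : ∀ j, GoodClause (cl j)) (f : List Bool → Bool)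
    (hf : ∀ s : PhiVar n → Bool, (∀ i : Fin n, s (.x i) = prediction f s i) → evalCNF cl s) :
    (GammaPhi n m cl).Viable (phiStrategy n f) := by
  intro s c hc hs
  have hn : (0 : ℝ) ≤ n := Nat.cast_nonneg n
  rcases hc with rfl | hc | hc
  · have : ¬ Deviated f s 0 := by rintro ⟨j, hj, _⟩; exact absurd hj (Nat.not_lt_zero _)
    simp [phiStrategy, this]
  · obtain ⟨i, hc⟩ := Set.mem_iUnion.mp hc
    rcases hc with rfl | rfl | rfl | rfl | rfl | rfl | rfl
    · have h0 := hs (.c0 i) true (by simp [pairLabel])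
      have h1 := hs (.c1 i) true (by simp [pairLabel])
      have he : earlyValue f s i = true := by simp [earlyValue, h0, h1]
      by_cases hd : Deviated f s i.val
      · simp [phiStrategy, hd]; linarith
      · simp [phiStrategy, hd, he]
    · have h0 := hs (.c0 i) false (by simp [pairLabel])
      have h1 := hs (.c1 i) false (by simp [pairLabel])
      have he : earlyValue f s i = false := by simp [earlyValue, h0, h1]
      simp [phiStrategy, he]
    · simp [phiStrategy]
    · simp only [phiStrategy]; linarith
    · simp only [phiStrategy, Fin.val_succ, Nat.cast_add, Nat.cast_one]; linarith
    · have hx := hs (.x i) false (by simp [singleLabel])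
      simp only [phiStrategy, Fin.val_succ, Nat.cast_add, Nat.cast_one]
      split_ifs with h1 h2 h2
      · exact absurd (hx.trans h2.2.symm) (deviated_succ h1 h2.1)
      all_goals linarith
    · have hx := hs (.x i) true (by simp [singleLabel])
      simp only [phiStrategy, Fin.val_succ, Nat.cast_add, Nat.cast_one]
      split_ifs with h1 h2 h2
      · exact absurd (hx.trans h2.2.symm) (deviated_succ h1 h2.1)
      all_goals linarith
  · obtain ⟨j, rfl⟩ := Set.mem_iUnion.mp hc
    have hd : Deviated f s n := by
      by_contra hcon
      refine not_evalClause_of_sats (hgood j) hs (hf s (fun i => ?_) j)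
      by_contra hne
      exact hcon ⟨i, i.isLt, hne⟩
    simp [phiStrategy, hd]

/-- **Lemma 3.** If the existential player has a winning strategy
`f : {0,1}* → {0,1}` for `Φ` (i.e. `φ` is true under every assignment `s` with
`s(x_i) = f(s(y_1), …, s(y_{i-1}))` for all `i`), then `Γ_Φ` is dynamically
controllable. -/
theorem gammaPhi_dc_of_existential_win (n m : ℕ) (hn : 1 ≤ n) (hm : 1 ≤ m)
    (cl : Fin m → QClause n) (hgood : ∀ j, GoodClause (cl j))
    (f : List Bool → Bool)
    (hf : ∀ s : PhiVar n → Bool,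
      (∀ i : Fin n, s (.x i) =
        f (List.ofFn fun k : Fin i.val => s (.y ⟨k.val, k.isLt.trans i.isLt⟩))) →
      evalCNF cl s) :
    (GammaPhi n m cl).DynamicallyControllable := by
  exact ⟨phiStrategy n f, phiStrategy_dynamic n m cl f, phiStrategy_viable n m cl hgood f hf⟩
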